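/- arXiv:2310.07838 — 2 statements merged into one kernel-verified Lean document; each statement's English description precedes it below -/
import Mathlib

section
/- Let S and A be nonempty finite sets, ρ ∈ Δ(S), π* ∈ Δ(A|S), and let D = ((s_1,a_1),…,(s_n,a_n)) be n i.i.d. samples from ρ×π*. Let π̂ ∈ Δ(A|S) be any conditional distribution satisfying π̂(·|s) = π*(·|s) for every s appearing among s_1,…,s_n. Then the expected risk satisfies E[ TV(π̂ ‖ π* | ρ) ] ≤ 4|S|/(9n). -/
open Finset

/-- `p` is a probability distribution on the finite set `A`. -/
def IsDist {A : Type} [Fintype A] (p : A → ℝ) : Prop :=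
  (∀ a, 0 ≤ p a) ∧ ∑ a, p a = 1

/-- `π` is a conditional probability distribution in `Δ(A|S)`. -/
def IsCondDist {S A : Type} [Fintype A] (π : S → A → ℝ) : Prop :=
  ∀ s, IsDist (π s)

/-- Conditional total variation `TV(π ‖ π' | ρ)`. -/
noncomputable def condTV {S A : Type} [Fintype S] [Fintype A]
    (ρ : S → ℝ) (π π' : S → A → ℝ) : ℝ :=
  ∑ s, ρ s * ((1 / 2) * ∑ a, |π s a - π' s a|)

/-- Probability of the dataset `D` under `n` i.i.d. samples from `ρ × π`. -/
noncomputable def wt {S A : Type} {n : ℕ} (ρ : S → ℝ) (π : S → A → ℝ)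
    (D : Fin n → S × A) : ℝ :=
  ∏ i, ρ (D i).1 * π (D i).1 (D i).2

/-! The learner errs only at unseen inputs, by at most `1` each, so its risk is at most the
`ρ`-mass that the sample misses. An input `s` is missed with probability `(1 - ρ s) ^ n`, whence
the expected missing mass is `∑ s, ρ s * (1 - ρ s) ^ n`. Each term is at most `e⁻¹ / n`, and
`e⁻¹ < 4 / 9`. -/

theorem natCast_mul_mul_one_sub_pow_le_exp_neg_one (n : ℕ) {x : ℝ} (hx : x ≤ 1) :
    n * (x * (1 - x) ^ n) ≤ Real.exp (-1) := by
  have hlin : n * x ≤ Real.exp (n * x - 1) := by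
    simpa only [sub_add_cancel] using Real.add_one_le_exp (n * x - 1)
  have hpow : (1 - x) ^ n ≤ Real.exp (-x) ^ n :=
    pow_le_pow_left₀ (sub_nonneg.2 hx) (Real.one_sub_le_exp_neg x) n
  calc n * (x * (1 - x) ^ n) = n * x * (1 - x) ^ n := by ring
    _ ≤ Real.exp (n * x - 1) * Real.exp (-x) ^ n :=
      mul_le_mul hlin hpow (pow_nonneg (sub_nonneg.2 hx) n) (Real.exp_nonneg _)
    _ = Real.exp (-1) := by
      rw [← Real.exp_nat_mul, ← Real.exp_add]
      ring_nf

section Distributions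

variable {S A : Type} [Fintype S] [Fintype A]

theorem IsDist.apply_le_one {p : A → ℝ} (hp : IsDist p) (a : A) : p a ≤ 1 :=
  hp.2 ▸ single_le_sum (fun b _ => hp.1 b) (mem_univ a)

theorem IsDist.half_sum_abs_sub_le_one {p q : A → ℝ} (hp : IsDist p) (hq : IsDist q) :
    (1 / 2) * ∑ a, |p a - q a| ≤ 1 := by
  have hsum : ∑ a, |p a - q a| ≤ ∑ a, (p a + q a) :=
    sum_le_sum fun a _ => abs_le.2 ⟨by linarith [hp.1 a], by linarith [hq.1 a]⟩
  rw [sum_add_distrib, hp.2, hq.2] at hsum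
  linarith

theorem condTV_le_sum_of_eq_off {ρ : S → ℝ} {π π' : S → A → ℝ} (hρ : ∀ s, 0 ≤ ρ s)
    (hπ : IsCondDist π) (hπ' : IsCondDist π') {T : Finset S} (heq : ∀ s ∉ T, π s = π' s) :
    condTV ρ π π' ≤ ∑ s ∈ T, ρ s := by
  have hoff : ∀ s ∉ T, ρ s * ((1 / 2) * ∑ a, |π s a - π' s a|) = 0 := fun s hs => by
    simp [heq s hs]
  calc condTV ρ π π' = ∑ s ∈ T, ρ s * ((1 / 2) * ∑ a, |π s a - π' s a|) :=
        (sum_subset (subset_univ T) fun s _ hs => hoff s hs).symm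
    _ ≤ ∑ s ∈ T, ρ s := sum_le_sum fun s _ =>
      mul_le_of_le_one_right (hρ s) ((hπ s).half_sum_abs_sub_le_one (hπ' s))

end Distributions

section Sampling

variable {S A : Type}

theorem wt_nonneg {n : ℕ} {ρ : S → ℝ} {π : S → A → ℝ} (hρ : ∀ s, 0 ≤ ρ s)
    (hπ : ∀ s a, 0 ≤ π s a) (D : Fin n → S × A) : 0 ≤ wt ρ π D :=
  prod_nonneg fun _ _ => mul_nonneg (hρ _) (hπ _ _)

variable [Fintype S]

open Classical in
/-- The inputs that do not occur in the dataset `D`, where the learner is unconstrained. -/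
noncomputable def unseen {n : ℕ} (D : Fin n → S × A) : Finset S :=
  {s | ∀ i, (D i).1 ≠ s}

theorem mem_unseen {n : ℕ} {D : Fin n → S × A} {s : S} :
    s ∈ unseen D ↔ ∀ i, (D i).1 ≠ s := by
  simp only [unseen, mem_filter, mem_univ, true_and]

variable [Fintype A] {π : S → A → ℝ}

open Classical in
theorem sum_wt_filter_forall_mem (ρ : S → ℝ) (hπ : ∀ s, ∑ a, π s a = 1) (n : ℕ)
    (T : Finset S) :
    ∑ D : Fin n → S × A with ∀ i, (D i).1 ∈ T, wt ρ π D = (∑ s ∈ T, ρ s) ^ n := by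
  have hmarginal : ∑ z ∈ T ×ˢ (univ : Finset A), ρ z.1 * π z.1 z.2 = ∑ s ∈ T, ρ s := by
    simp only [sum_product, ← mul_sum, hπ, mul_one]
  rw [← hmarginal, sum_pow']
  refine sum_congr ?_ fun _ _ => rfl
  ext D
  simp only [mem_filter, mem_univ, true_and, Fintype.mem_piFinset, mem_product, and_true]

open Classical in
theorem sum_wt_filter_mem_unseen {ρ : S → ℝ} (hρ : ∑ s, ρ s = 1)
    (hπ : ∀ s, ∑ a, π s a = 1) (n : ℕ) (s : S) :
    ∑ D : Fin n → S × A with s ∈ unseen D, wt ρ π D = (1 - ρ s) ^ n := by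
  have hcompl : ∑ t ∈ ({s}ᶜ : Finset S), ρ t = 1 - ρ s := by
    rw [← hρ, Fintype.sum_eq_add_sum_compl s ρ, add_sub_cancel_left]
  rw [← hcompl, ← sum_wt_filter_forall_mem ρ hπ n]
  simp only [mem_unseen, mem_compl, mem_singleton, ne_eq]

theorem sum_wt_mul_sum_unseen {ρ : S → ℝ} (hρ : ∑ s, ρ s = 1)
    (hπ : ∀ s, ∑ a, π s a = 1) (n : ℕ) :
    ∑ D : Fin n → S × A, wt ρ π D * ∑ s ∈ unseen D, ρ s = ∑ s, ρ s * (1 - ρ s) ^ n := by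
  classical
  calc ∑ D : Fin n → S × A, wt ρ π D * ∑ s ∈ unseen D, ρ s
      = ∑ D : Fin n → S × A, ∑ s ∈ unseen D, ρ s * wt ρ π D := by
        simp only [mul_sum, mul_comm]
    _ = ∑ s, ∑ D : Fin n → S × A with s ∈ unseen D, ρ s * wt ρ π D :=
        sum_comm' fun D s => by simp only [mem_filter, mem_univ, true_and, and_true]
    _ = ∑ s, ρ s * (1 - ρ s) ^ n := by
        simp only [← mul_sum, sum_wt_filter_mem_unseen hρ hπ]

end Sampling

/-- expected-risk upper bound `4|S|/(9n)` for any learner matching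
the full teacher distribution `π*(·|s)` at every visited input `s`. -/
theorem stmt_14 (S A : Type) [Fintype S] [Fintype A] [Nonempty S] [Nonempty A]
    (ρ : S → ℝ) (πs : S → A → ℝ) (hρ : IsDist ρ) (hπs : IsCondDist πs)
    (n : ℕ) (hn : 0 < n)
    (est : (Fin n → S × A) → S → A → ℝ)
    (hest : ∀ D, IsCondDist (est D))
    (hmatch : ∀ D s, (∃ i : Fin n, (D i).1 = s) → ∀ a, est D s a = πs s a) :
    ∑ D : Fin n → S × A, wt ρ πs D * condTV ρ (est D) πs ≤
      4 * (Fintype.card S : ℝ) / (9 * n) := by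
  have hrisk (D : Fin n → S × A) : condTV ρ (est D) πs ≤ ∑ s ∈ unseen D, ρ s :=
    condTV_le_sum_of_eq_off hρ.1 (hest D) hπs fun s hs =>
      funext (hmatch D s (by simpa only [mem_unseen, not_forall, not_not] using hs))
  have hterm (s : S) : ρ s * (1 - ρ s) ^ n ≤ 4 / (9 * n) := by
    rw [le_div_iff₀ (by positivity)]
    linarith [natCast_mul_mul_one_sub_pow_le_exp_neg_one n (hρ.apply_le_one s),
      Real.exp_neg_one_lt_d9]
  calc ∑ D : Fin n → S × A, wt ρ πs D * condTV ρ (est D) πs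
      ≤ ∑ D : Fin n → S × A, wt ρ πs D * ∑ s ∈ unseen D, ρ s :=
        sum_le_sum fun D _ =>
          mul_le_mul_of_nonneg_left (hrisk D) (wt_nonneg hρ.1 (fun s => (hπs s).1) D)
    _ = ∑ s, ρ s * (1 - ρ s) ^ n := sum_wt_mul_sum_unseen hρ.2 (fun s => (hπs s).2) n
    _ ≤ ∑ _s : S, 4 / (9 * (n : ℝ)) := sum_le_sum fun s _ => hterm s
    _ = 4 * (Fintype.card S : ℝ) / (9 * n) := by
        rw [sum_const, card_univ, nsmul_eq_mul]
        ring
end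

section
/- Let X be a measurable space, Y a nonempty finite set, d a positive integer, and φ : X × Y → ℝ^d a measurable feature map with sup_{(x,y)} ‖φ(x,y)‖₂ ≤ M. For θ ∈ ℝ^d define the log-linear (softmax) conditional distribution π_θ(y|x) := exp(⟨φ(x,y), θ⟩) / Σ_{k∈Y} exp(⟨φ(x,k), θ⟩). Then for any two parameters θ, θ′ ∈ ℝ^d and any probability measure ν on X, ∫_X TV( π_θ(·|x), π_{θ′}(·|x) ) dν(x) ≤ M·‖θ − θ′‖₂, where TV(p,q) := (1/2)·Σ_{y∈Y} |p(y) − q(y)|. -/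
open Finset MeasureTheory

open scoped RealInnerProductSpace

/-- The log-linear (softmax) conditional distribution induced by a feature map
`φ` and a parameter `θ`. -/
noncomputable def softmaxPolicy {X Y : Type} [Fintype Y] {d : ℕ}
    (φ : X × Y → EuclideanSpace ℝ (Fin d)) (θ : EuclideanSpace ℝ (Fin d))
    (x : X) (y : Y) : ℝ :=
  Real.exp ⟪φ (x, y), θ⟫ / ∑ k, Real.exp ⟪φ (x, k), θ⟫

/-!
Let `p` and `q` be the softmax distributions of logits `a` and `b` with `|a - b| ≤ D`. Since
`log p - log q` differs from `a - b` by a constant and `∑ (p - q) = 0`, the Jeffreys divergence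
`∑ (p - q) (log p - log q)` equals `∑ (p - q) (a - b)`, which is at most `2 D · TV(p, q)`. On the
other hand it is at least `4 TV(p, q)²`, by a symmetric form of Pinsker's inequality. Hence
`TV(p, q) ≤ D / 2`. For log-linear policies, Cauchy–Schwarz gives `D = M ‖θ - θ'‖`.
-/

section Divergences

variable {ι : Type*} [Fintype ι]

/-- The total variation distance of two mass functions on a finite type. It is defined for
arbitrary real-valued functions. -/
noncomputable def tvDist (p q : ι → ℝ) : ℝ :=
  (1 / 2) * ∑ i, |p i - q i|

/-- The Jeffreys divergence `KL(p ‖ q) + KL(q ‖ p)` of two mass functions on a finite type, in a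
form meaningful for functions without zeros, as `Real.log 0 = 0`. -/
noncomputable def jeffreysDiv (p q : ι → ℝ) : ℝ :=
  ∑ i, (p i - q i) * (Real.log (p i) - Real.log (q i))

lemma tvDist_nonneg (p q : ι → ℝ) : 0 ≤ tvDist p q := by
  unfold tvDist
  positivity

lemma two_mul_sub_div_add_le_log_sub_log {x y : ℝ} (hy : 0 < y) (hyx : y ≤ x) :
    2 * (x - y) / (x + y) ≤ Real.log x - Real.log y := by
  have hx : 0 < x := hy.trans_le hyx
  have h_add : (x - y) / y + 2 = (x + y) / y := by
    field_simp
    ring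
  calc 2 * (x - y) / (x + y) = 2 * ((x - y) / y) / ((x - y) / y + 2) := by
        rw [h_add, ← mul_div_assoc, div_div_div_cancel_right₀ hy.ne']
    _ ≤ Real.log (1 + (x - y) / y) :=
        Real.le_log_one_add_of_nonneg (div_nonneg (sub_nonneg.2 hyx) hy.le)
    _ = Real.log x - Real.log y := by
        rw [← Real.log_div hx.ne' hy.ne', sub_div, div_self hy.ne', add_sub_cancel]

lemma two_mul_sq_sub_div_add_le {x y : ℝ} (hx : 0 < x) (hy : 0 < y) :
    2 * ((x - y) ^ 2 / (x + y)) ≤ (x - y) * (Real.log x - Real.log y) := by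
  wlog hyx : y ≤ x generalizing x y
  · have := this hy hx (le_of_not_ge hyx)
    rw [add_comm, sub_sq_comm] at this
    linarith
  calc 2 * ((x - y) ^ 2 / (x + y)) = (x - y) * (2 * (x - y) / (x + y)) := by ring
    _ ≤ (x - y) * (Real.log x - Real.log y) :=
      mul_le_mul_of_nonneg_left (two_mul_sub_div_add_le_log_sub_log hy hyx) (sub_nonneg.2 hyx)

lemma sq_two_mul_tvDist_le_jeffreysDiv {p q : ι → ℝ} (hp : ∀ i, 0 < p i) (hq : ∀ i, 0 < q i)
    (hp_sum : ∑ i, p i = 1) (hq_sum : ∑ i, q i = 1) :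
    (2 * tvDist p q) ^ 2 ≤ jeffreysDiv p q := by
  have h_sum : ∑ i, (p i + q i) = 2 := by rw [sum_add_distrib, hp_sum, hq_sum, one_add_one_eq_two]
  calc (2 * tvDist p q) ^ 2 = 2 * ((∑ i, |p i - q i|) ^ 2 / ∑ i, (p i + q i)) := by
        rw [h_sum, tvDist]
        ring
    _ ≤ 2 * ∑ i, |p i - q i| ^ 2 / (p i + q i) := by
        gcongr
        exact sq_sum_div_le_sum_sq_div _ _ fun i _ ↦ add_pos (hp i) (hq i)
    _ = ∑ i, 2 * ((p i - q i) ^ 2 / (p i + q i)) := by simp only [mul_sum, sq_abs]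
    _ ≤ jeffreysDiv p q := sum_le_sum fun i _ ↦ two_mul_sq_sub_div_add_le (hp i) (hq i)

end Divergences

section Softmax

variable {ι : Type*} [Fintype ι]

/-- The softmax mass function of a vector of logits: the mass at `i` is proportional to
`exp (a i)`. -/
noncomputable def softmax (a : ι → ℝ) (i : ι) : ℝ :=
  Real.exp (a i) / ∑ j, Real.exp (a j)

lemma aemeasurable_tvDist_softmax {X : Type*} [MeasurableSpace X] {ν : Measure X}
    {a b : X → ι → ℝ} (ha : ∀ i, AEMeasurable (fun x ↦ a x i) ν)
    (hb : ∀ i, AEMeasurable (fun x ↦ b x i) ν) :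
    AEMeasurable (fun x ↦ tvDist (softmax (a x)) (softmax (b x))) ν := by
  unfold tvDist softmax
  fun_prop

variable [Nonempty ι]

lemma softmax_pos (a : ι → ℝ) (i : ι) : 0 < softmax a i := by
  unfold softmax
  positivity

lemma sum_softmax (a : ι → ℝ) : ∑ i, softmax a i = 1 := by
  simp only [softmax, ← sum_div]
  exact div_self (by positivity)

lemma log_softmax (a : ι → ℝ) (i : ι) :
    Real.log (softmax a i) = a i - Real.log (∑ j, Real.exp (a j)) := by
  rw [softmax, Real.log_div (Real.exp_ne_zero _) (by positivity), Real.log_exp]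

lemma jeffreysDiv_softmax (a b : ι → ℝ) :
    jeffreysDiv (softmax a) (softmax b) = ∑ i, (softmax a i - softmax b i) * (a i - b i) := by
  set C := Real.log (∑ j, Real.exp (b j)) - Real.log (∑ j, Real.exp (a j)) with hC
  have h_log (i : ι) : Real.log (softmax a i) - Real.log (softmax b i) = a i - b i + C := by
    rw [log_softmax, log_softmax, hC]
    ring
  have h_sum : ∑ i, (softmax a i - softmax b i) = 0 := by
    rw [sum_sub_distrib, sum_softmax, sum_softmax, sub_self]
  simp only [jeffreysDiv, h_log, mul_add, sum_add_distrib, ← sum_mul, h_sum, zero_mul, add_zero]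

lemma jeffreysDiv_softmax_le {a b : ι → ℝ} {D : ℝ} (h : ∀ i, |a i - b i| ≤ D) :
    jeffreysDiv (softmax a) (softmax b) ≤ D * (2 * tvDist (softmax a) (softmax b)) := by
  calc jeffreysDiv (softmax a) (softmax b)
      = ∑ i, (softmax a i - softmax b i) * (a i - b i) := jeffreysDiv_softmax a b
    _ ≤ ∑ i, |softmax a i - softmax b i| * D := by
        refine sum_le_sum fun i _ ↦ (le_abs_self _).trans ?_
        rw [abs_mul]
        exact mul_le_mul_of_nonneg_left (h i) (abs_nonneg _)
    _ = D * (2 * tvDist (softmax a) (softmax b)) := by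
        rw [← sum_mul, tvDist]
        ring

theorem tvDist_softmax_le {a b : ι → ℝ} {D : ℝ} (h : ∀ i, |a i - b i| ≤ D) :
    tvDist (softmax a) (softmax b) ≤ D / 2 := by
  have h_sq : (2 * tvDist (softmax a) (softmax b)) ^ 2
      ≤ D * (2 * tvDist (softmax a) (softmax b)) :=
    (sq_two_mul_tvDist_le_jeffreysDiv (softmax_pos a) (softmax_pos b) (sum_softmax a)
      (sum_softmax b)).trans (jeffreysDiv_softmax_le h)
  have hD : 0 ≤ D := (abs_nonneg _).trans (h (Classical.arbitrary ι))
  nlinarith [tvDist_nonneg (softmax a) (softmax b)]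

end Softmax

section LogLinear

variable {ι E : Type*} [Fintype ι] [Nonempty ι] [NormedAddCommGroup E] [InnerProductSpace ℝ E]

lemma tvDist_softmax_inner_le {v : ι → E} {M : ℝ} (hv : ∀ i, ‖v i‖ ≤ M) (θ θ' : E) :
    tvDist (softmax fun i ↦ ⟪v i, θ⟫) (softmax fun i ↦ ⟪v i, θ'⟫) ≤ M * ‖θ - θ'‖ / 2 := by
  refine tvDist_softmax_le fun i ↦ ?_
  calc |⟪v i, θ⟫ - ⟪v i, θ'⟫| = |⟪v i, θ - θ'⟫| := by rw [inner_sub_right]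
    _ ≤ ‖v i‖ * ‖θ - θ'‖ := abs_real_inner_le_norm _ _
    _ ≤ M * ‖θ - θ'‖ := by gcongr; exact hv i

variable {X : Type*} [MeasurableSpace X] {ν : Measure X} {φ : X × ι → E}

theorem stmt_15_general [IsProbabilityMeasure ν]
    (hφ : ∀ y, AEStronglyMeasurable (fun x ↦ φ (x, y)) ν) {M : ℝ}
    (hM : ∀ᵐ x ∂ν, ∀ y, ‖φ (x, y)‖ ≤ M) (θ θ' : E) :
    ∫ x, tvDist (softmax fun y ↦ ⟪φ (x, y), θ⟫) (softmax fun y ↦ ⟪φ (x, y), θ'⟫) ∂ν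
      ≤ M * ‖θ - θ'‖ / 2 := by
  have h_le := hM.mono fun x hx ↦ tvDist_softmax_inner_le hx θ θ'
  have h_logits (η : E) (y : ι) : AEMeasurable (fun x ↦ ⟪φ (x, y), η⟫) ν :=
    (hφ y).inner_const.aemeasurable
  have h_meas := aemeasurable_tvDist_softmax (h_logits θ) (h_logits θ')
  have h_int := Integrable.of_bound h_meas.aestronglyMeasurable _
    (h_le.mono fun x hx ↦ (Real.norm_of_nonneg (tvDist_nonneg _ _)).trans_le hx)
  simpa using integral_mono_ae h_int (integrable_const _) h_le

end LogLinear

/-- for log-linear conditional distributions with features bounded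
by `M` in Euclidean norm, the expected total variation between the policies of
two parameters is at most `M·‖θ − θ′‖₂`. -/
theorem stmt_15 (X : Type) [MeasurableSpace X] (Y : Type) [Fintype Y] [Nonempty Y]
    (d : ℕ) (hd : 0 < d)
    (φ : X × Y → EuclideanSpace ℝ (Fin d))
    (hφmeas : ∀ y, Measurable fun x => φ (x, y))
    (M : ℝ) (hM : ∀ x y, ‖φ (x, y)‖ ≤ M)
    (θ θ' : EuclideanSpace ℝ (Fin d))
    (ν : Measure X) [IsProbabilityMeasure ν] :
    ∫ x, (1 / 2) * ∑ y, |softmaxPolicy φ θ x y - softmaxPolicy φ θ' x y| ∂ν ≤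
      M * ‖θ - θ'‖ := by
  have h_half := stmt_15_general (fun y ↦ (hφmeas y).aestronglyMeasurable)
    (Filter.Eventually.of_forall hM) θ θ' (ν := ν)
  have h_nonneg := (integral_nonneg fun _ ↦ tvDist_nonneg _ _).trans h_half
  exact h_half.trans (by linarith)
end
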